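/- arXiv:2006.16359 — 2 statements merged into one kernel-verified Lean document; each statement's English description precedes it below -/
import Mathlib

section
/- Let π ∈ S_n avoid 132 and σ ≤ π in the right weak order. Fix k ≤ n. Then for any index i, the conditions σ_i < σ_k and π⁻¹σ_i < π⁻¹σ_k together imply i < k. Consequently, the number of points (σ_i, π⁻¹σ_i) with i < k, σ_i < σ_k, π⁻¹σ_i < π⁻¹σ_k equals the number of values a < σ_k such that the pair (σ_k, a) is not an inversion of π. -/
open Equiv

/-- The inversion set of `σ`: pairs of values `(σ i, σ j)` with `i < j` and `σ i > σ j`. -/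
def invSet {m : ℕ} (σ : Equiv.Perm (Fin m)) : Set (Fin m × Fin m) :=
  {p | ∃ i j : Fin m, i < j ∧ σ j < σ i ∧ p = (σ i, σ j)}

/-- The right weak Bruhat order, characterized by containment of inversion sets. -/
def wle {m : ℕ} (σ π : Equiv.Perm (Fin m)) : Prop := invSet σ ⊆ invSet π

/-- `σ` contains the pattern 132. -/
def contains132 {m : ℕ} (σ : Equiv.Perm (Fin m)) : Prop :=
  ∃ i₁ i₂ i₃ : Fin m, i₁ < i₂ ∧ i₂ < i₃ ∧ σ i₁ < σ i₃ ∧ σ i₃ < σ i₂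

lemma mem_invSet_iff {m : ℕ} (τ : Equiv.Perm (Fin m)) (a b : Fin m) :
    (b, a) ∈ invSet τ ↔ a < b ∧ τ.symm b < τ.symm a := by
  constructor
  · rintro ⟨i, j, hij, hlt, hba⟩
    obtain ⟨rfl, rfl⟩ := Prod.mk.inj hba
    simpa using ⟨hlt, hij⟩
  · rintro ⟨hab, hpos⟩
    exact ⟨τ.symm b, τ.symm a, hpos, by simpa using hab, by simp⟩

lemma notMem_invSet_iff_of_lt {m : ℕ} (τ : Equiv.Perm (Fin m)) {a b : Fin m} (hab : a < b) :
    (b, a) ∉ invSet τ ↔ τ.symm a < τ.symm b := by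
  have hne : τ.symm a ≠ τ.symm b := τ.symm.injective.ne hab.ne
  rw [mem_invSet_iff, and_iff_right hab, not_lt, hne.le_iff_lt]

lemma wle.symm_lt_symm {m : ℕ} {σ π : Equiv.Perm (Fin m)} (hσπ : wle σ π) {a b : Fin m}
    (hab : a < b) (hpos : π.symm a < π.symm b) : σ.symm a < σ.symm b := by
  rw [← notMem_invSet_iff_of_lt _ hab] at hpos ⊢
  exact fun hinv => hpos (hσπ hinv)

theorem quadrant_III_count_general {n : ℕ} (π σ : Equiv.Perm (Fin n)) (hσπ : wle σ π)
    (k : Fin n) :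
    (∀ i : Fin n, σ i < σ k → π.symm (σ i) < π.symm (σ k) → i < k) ∧
      {i : Fin n | i < k ∧ σ i < σ k ∧ π.symm (σ i) < π.symm (σ k)}.ncard =
        {a : Fin n | a < σ k ∧ (σ k, a) ∉ invSet π}.ncard := by
  have lt_of_quadrant (i : Fin n) (hval : σ i < σ k) (hpos : π.symm (σ i) < π.symm (σ k)) :
      i < k := by
    simpa only [symm_apply_apply] using hσπ.symm_lt_symm hval hpos
  have quadrant_eq_preimage : {i | i < k ∧ σ i < σ k ∧ π.symm (σ i) < π.symm (σ k)} =
      σ ⁻¹' {a | a < σ k ∧ (σ k, a) ∉ invSet π} := by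
    ext i
    calc
      i < k ∧ σ i < σ k ∧ π.symm (σ i) < π.symm (σ k)
        ↔ σ i < σ k ∧ π.symm (σ i) < π.symm (σ k) :=
          and_iff_right_of_imp fun h => lt_of_quadrant i h.1 h.2
      _ ↔ σ i < σ k ∧ (σ k, σ i) ∉ invSet π :=
          and_congr_right fun h => (notMem_invSet_iff_of_lt π h).symm
  refine ⟨lt_of_quadrant, ?_⟩
  rw [quadrant_eq_preimage]
  exact Set.ncard_preimage_of_injective_subset_range σ.injective fun a _ => σ.surjective a

/-- Quadrant III membership forces `i < k`, and the number of points of the permutation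
path in Quadrant III equals the number of values `a < σ_k` with `(σ_k, a)` not an
inversion of `π`. -/
theorem quadrant_III_count {n : ℕ} (π σ : Equiv.Perm (Fin n))
    (hπ : ¬ contains132 π) (hσπ : wle σ π) (k : Fin n) :
    (∀ i : Fin n, σ i < σ k → π.symm (σ i) < π.symm (σ k) → i < k) ∧
      {i : Fin n | i < k ∧ σ i < σ k ∧ π.symm (σ i) < π.symm (σ k)}.ncard =
        {a : Fin n | a < σ k ∧ (σ k, a) ∉ invSet π}.ncard :=
  quadrant_III_count_general π σ hσπ k
end

section
/- For any permutation σ ∈ S_n of length ℓ = ℓ(σ), the principal specialization of the Schubert polynomial satisfies Macdonald's identity: 𝔖_σ(1, 1, ..., 1) = (1/ℓ!) · Σ i_1 i_2 ⋯ i_ℓ, where the sum ranges over all reduced words (i_1, ..., i_ℓ) such that s_{i_1} ⋯ s_{i_ℓ} = σ. -/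
open Equiv MvPolynomial

/-- The adjacent transposition `s i`, swapping positions `i` and `i+1` (0-indexed). -/
def simpleT {n : ℕ} (i : Fin n) : Equiv.Perm (Fin (n+1)) := Equiv.swap i.castSucc i.succ

/-- Coxeter length: minimal length of a word in adjacent transpositions. -/
noncomputable def len {n : ℕ} (σ : Equiv.Perm (Fin (n+1))) : ℕ :=
  sInf {k | ∃ l : List (Fin n), l.length = k ∧ (l.map simpleT).prod = σ}

/-- `S` is the family of Schubert polynomials. -/
def IsSchubertFamily {n : ℕ} (S : Equiv.Perm (Fin (n+1)) → MvPolynomial (Fin (n+1)) ℂ) : Prop :=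
  S Fin.revPerm = ∏ i : Fin (n+1), X i ^ (n - (i : ℕ)) ∧
  ∀ (σ : Equiv.Perm (Fin (n+1))) (i : Fin n), len σ = len (simpleT i * σ) + 1 →
    (X i.castSucc - X i.succ) * S (simpleT i * σ) =
      S σ - rename (Equiv.swap i.castSucc i.succ) (S σ)

/-!
The derivation `∇ = ∑ ∂/∂x_i` kills `x_i - x_{i+1}` and commutes with permuting the variables, so
it commutes with divided differences. Since these act on the left of `σ`, the identity
`∇ 𝔖_σ = ∑ k · 𝔖_{σ s_k}`, summed over the right descents `k` of `σ`, propagates down the left weak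
order from the longest permutation, where it is the product rule for the staircase monomial. By
Euler's identity `∇ 𝔖_σ` takes the value `ℓ(σ) 𝔖_σ(1, …, 1)` at `(1, …, 1)`, which turns this
into the recursion satisfied by the weighted count of reduced words according to their last letter.
The initial value `𝔖_1 = 1` comes from a chain in the weak order along which every Schubert
polynomial is a monomial.
-/

section Length

variable {n : ℕ}

lemma simpleT_mul_self (i : Fin n) : simpleT i * simpleT i = 1 :=
  swap_mul_self _ _

lemma simpleT_inv (i : Fin n) : (simpleT i)⁻¹ = simpleT i :=
  swap_inv _ _

lemma simpleT_mul_cancel_left (i : Fin n) (σ : Perm (Fin (n + 1))) :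
    simpleT i * (simpleT i * σ) = σ := by
  rw [← mul_assoc, simpleT_mul_self, one_mul]

lemma mul_simpleT_cancel_right (σ : Perm (Fin (n + 1))) (i : Fin n) :
    σ * simpleT i * simpleT i = σ := by
  rw [mul_assoc, simpleT_mul_self, mul_one]

lemma simpleT_apply_castSucc (i : Fin n) : simpleT i i.castSucc = i.succ :=
  swap_apply_left _ _

lemma simpleT_apply_succ (i : Fin n) : simpleT i i.succ = i.castSucc :=
  swap_apply_right _ _

lemma revPerm_mul_simpleT (i : Fin n) :
    Fin.revPerm * simpleT i = simpleT i.rev * Fin.revPerm := by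
  simp only [simpleT]
  rw [mul_swap_eq_swap_mul, Fin.revPerm_apply, Fin.revPerm_apply, Fin.rev_castSucc, Fin.rev_succ,
    swap_comm]

lemma simpleT_lt_simpleT_iff {i : Fin n} {a b : Fin (n + 1)}
    (h : ¬(a = i.castSucc ∧ b = i.succ)) (h' : ¬(a = i.succ ∧ b = i.castSucc)) :
    simpleT i a < simpleT i b ↔ a < b := by
  simp only [simpleT, swap_apply_def]
  simp only [Fin.ext_iff, Fin.lt_def, Fin.val_castSucc, Fin.val_succ] at *
  split_ifs <;> simp only [Fin.val_castSucc, Fin.val_succ] at * <;> omega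

lemma perm_eq_one_of_forall_castSucc_lt_succ {σ : Perm (Fin (n + 1))}
    (h : ∀ i : Fin n, σ i.castSucc < σ i.succ) : σ = 1 :=
  Equiv.coe_fn_injective (Fin.strictMono_iff_lt_succ.2 h).eq_id

lemma perm_eq_revPerm_of_forall_succ_lt_castSucc {σ : Perm (Fin (n + 1))}
    (h : ∀ i : Fin n, σ i.succ < σ i.castSucc) : σ = Fin.revPerm := by
  have hrev : Fin.revPerm * σ = 1 :=
    perm_eq_one_of_forall_castSucc_lt_succ fun i ↦ by simpa using h i
  rw [eq_inv_of_mul_eq_one_right hrev]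
  rfl

lemma perm_castSucc_lt_or_gt_succ (σ : Perm (Fin (n + 1))) (i : Fin n) :
    σ i.castSucc < σ i.succ ∨ σ i.succ < σ i.castSucc :=
  lt_or_gt_of_ne (σ.injective.ne Fin.castSucc_lt_succ.ne)

/-- The inversion set of a permutation, as pairs of positions. Its cardinality is the Coxeter
length, see `len_eq_card_inversions`. -/
def inversions {α : Type*} [Fintype α] [LinearOrder α] (σ : Perm α) : Finset (α × α) :=
  {p | p.1 < p.2 ∧ σ p.2 < σ p.1}

lemma mem_inversions {α : Type*} [Fintype α] [LinearOrder α] {σ : Perm α} {a b : α} :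
    (a, b) ∈ inversions σ ↔ a < b ∧ σ b < σ a := by
  simp [inversions]

lemma inversions_one {α : Type*} [Fintype α] [LinearOrder α] :
    inversions (1 : Perm α) = ∅ := by
  ext ⟨a, b⟩
  simpa [mem_inversions] using le_of_lt

lemma card_inversions_revPerm (m : ℕ) :
    (inversions (Fin.revPerm : Perm (Fin (m + 1)))).card = ∑ i : Fin (m + 1), (m - i) := by
  simp_rw [inversions, Finset.card_filter, Fintype.sum_prod_type, Fin.revPerm_apply,
    Fin.rev_lt_rev, and_self, ← Finset.card_filter]
  refine Finset.sum_congr rfl fun i _ ↦ ?_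
  rw [Finset.filter_lt_eq_Ioi, Fin.card_Ioi]
  omega

lemma inversions_mul_simpleT {σ : Perm (Fin (n + 1))} {i : Fin n}
    (h : σ i.castSucc < σ i.succ) :
    inversions (σ * simpleT i) = insert (i.castSucc, i.succ)
      ((inversions σ).map (prodCongr (simpleT i) (simpleT i)).toEmbedding) := by
  ext ⟨a, b⟩
  have hsymm : (prodCongr (simpleT i) (simpleT i)).symm (a, b) = (simpleT i a, simpleT i b) := by
    simp [simpleT]
  rw [Finset.mem_insert, Finset.mem_map_equiv, hsymm]
  simp only [mem_inversions, Perm.mul_apply, Prod.mk.injEq]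
  by_cases hab : a = i.castSucc ∧ b = i.succ
  · obtain ⟨rfl, rfl⟩ := hab
    simp [simpleT_apply_castSucc, simpleT_apply_succ, h]
  by_cases hba : a = i.succ ∧ b = i.castSucc
  · obtain ⟨rfl, rfl⟩ := hba
    simp [simpleT_apply_castSucc, simpleT_apply_succ, h.not_gt, Fin.castSucc_lt_succ.not_gt,
      Fin.castSucc_lt_succ.ne']
  · rw [simpleT_lt_simpleT_iff hab hba]
    simp [hab]

lemma card_inversions_mul_simpleT_of_lt {σ : Perm (Fin (n + 1))} {i : Fin n}
    (h : σ i.castSucc < σ i.succ) :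
    (inversions (σ * simpleT i)).card = (inversions σ).card + 1 := by
  rw [inversions_mul_simpleT h, Finset.card_insert_of_notMem, Finset.card_map]
  rw [Finset.mem_map_equiv]
  simp [simpleT, mem_inversions, Fin.castSucc_lt_succ.le]

lemma card_inversions_mul_simpleT_of_gt {σ : Perm (Fin (n + 1))} {i : Fin n}
    (h : σ i.succ < σ i.castSucc) :
    (inversions σ).card = (inversions (σ * simpleT i)).card + 1 := by
  rw [← card_inversions_mul_simpleT_of_lt, mul_simpleT_cancel_right]
  simpa [simpleT] using h

lemma card_inversions_prod_le (l : List (Fin n)) :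
    (inversions (l.map simpleT).prod).card ≤ l.length := by
  induction l using List.reverseRecOn with
  | nil => simp [inversions_one]
  | append_singleton l i ih =>
    simp only [List.map_append, List.prod_append, List.map_singleton, List.prod_singleton,
      List.length_append, List.length_singleton]
    rcases perm_castSucc_lt_or_gt_succ (l.map simpleT).prod i with h | h
    · have := card_inversions_mul_simpleT_of_lt h
      omega
    · have := card_inversions_mul_simpleT_of_gt h
      omega

lemma exists_word_of_card_inversions (σ : Perm (Fin (n + 1))) :
    ∃ l : List (Fin n), l.length = (inversions σ).card ∧ (l.map simpleT).prod = σ := by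
  induction hm : (inversions σ).card generalizing σ with
  | zero =>
    refine ⟨[], rfl, (perm_eq_one_of_forall_castSucc_lt_succ fun i ↦ ?_).symm⟩
    refine (perm_castSucc_lt_or_gt_succ σ i).resolve_right fun h ↦ ?_
    have := card_inversions_mul_simpleT_of_gt h
    omega
  | succ m ih =>
    obtain ⟨i, hi⟩ : ∃ i : Fin n, σ i.succ < σ i.castSucc := by
      by_contra! hle
      have hone : σ = 1 := perm_eq_one_of_forall_castSucc_lt_succ fun i ↦
        (perm_castSucc_lt_or_gt_succ σ i).resolve_right (hle i).not_gt
      simp [hone, inversions_one] at hm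
    obtain ⟨l, hlen, hprod⟩ := ih (σ * simpleT i) (by
      have := card_inversions_mul_simpleT_of_gt hi
      omega)
    exact ⟨l ++ [i], by simp [hlen], by simp [hprod, mul_simpleT_cancel_right]⟩

lemma len_prod_le (l : List (Fin n)) : len (l.map simpleT).prod ≤ l.length :=
  Nat.sInf_le ⟨l, rfl, rfl⟩

lemma len_eq_card_inversions (σ : Perm (Fin (n + 1))) : len σ = (inversions σ).card := by
  obtain ⟨l, hlen, hprod⟩ := exists_word_of_card_inversions σ
  refine le_antisymm (Nat.sInf_le ⟨l, hlen, hprod⟩) (le_csInf ⟨_, l, hlen, hprod⟩ ?_)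
  rintro _ ⟨l, rfl, rfl⟩
  exact card_inversions_prod_le l

lemma exists_reduced_word (σ : Perm (Fin (n + 1))) :
    ∃ l : List (Fin n), l.length = len σ ∧ (l.map simpleT).prod = σ := by
  simpa only [len_eq_card_inversions] using exists_word_of_card_inversions σ

lemma eq_one_of_len_eq_zero {σ : Perm (Fin (n + 1))} (h : len σ = 0) : σ = 1 := by
  obtain ⟨l, hlen, rfl⟩ := exists_reduced_word σ
  simp [List.length_eq_zero_iff.1 (hlen.trans h)]

lemma len_inv_le (σ : Perm (Fin (n + 1))) : len σ⁻¹ ≤ len σ := by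
  obtain ⟨l, hlen, hprod⟩ := exists_reduced_word σ
  have hinv : (l.reverse.map simpleT).prod = σ⁻¹ := by
    rw [← hprod, List.prod_inv_reverse, List.map_reverse, List.map_map]
    simp only [Function.comp_def, simpleT_inv]
  rw [← hinv, ← hlen, ← l.length_reverse]
  exact len_prod_le _

lemma len_inv (σ : Perm (Fin (n + 1))) : len σ⁻¹ = len σ :=
  le_antisymm (len_inv_le σ) (by simpa using len_inv_le σ⁻¹)

lemma len_mul_simpleT (σ : Perm (Fin (n + 1))) (i : Fin n) :
    len (σ * simpleT i) = len σ + 1 ∨ len σ = len (σ * simpleT i) + 1 := by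
  simp only [len_eq_card_inversions]
  exact (perm_castSucc_lt_or_gt_succ σ i).imp card_inversions_mul_simpleT_of_lt
    card_inversions_mul_simpleT_of_gt

lemma len_simpleT_mul (i : Fin n) (σ : Perm (Fin (n + 1))) :
    len (simpleT i * σ) = len σ + 1 ∨ len σ = len (simpleT i * σ) + 1 := by
  rw [← len_inv (simpleT i * σ), ← len_inv σ, mul_inv_rev, simpleT_inv]
  exact len_mul_simpleT σ⁻¹ i

lemma len_simpleT_mul_mul_lt_iff {i : Fin n} {σ : Perm (Fin (n + 1))}
    (h : len (simpleT i * σ) < len σ) (k : Fin n) :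
    len (simpleT i * (σ * simpleT k)) < len (simpleT i * σ) ↔
      len (σ * simpleT k) < len σ ∧ len (simpleT i * (σ * simpleT k)) < len (σ * simpleT k) := by
  have h₁ := len_simpleT_mul i σ
  have h₂ := len_mul_simpleT σ k
  have h₃ := len_simpleT_mul i (σ * simpleT k)
  have h₄ := len_mul_simpleT (simpleT i * σ) k
  rw [mul_assoc] at h₄
  omega

lemma eq_revPerm_of_forall_len_simpleT_mul_lt {σ : Perm (Fin (n + 1))}
    (h : ∀ i : Fin n, len (simpleT i * σ) < len σ) : σ = Fin.revPerm := by
  have hinv : σ⁻¹ = Fin.revPerm := perm_eq_revPerm_of_forall_succ_lt_castSucc fun i ↦ by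
    refine (perm_castSucc_lt_or_gt_succ σ⁻¹ i).resolve_left fun hlt ↦ ?_
    have hasc := card_inversions_mul_simpleT_of_lt hlt
    rw [← simpleT_inv, ← mul_inv_rev, ← len_eq_card_inversions, ← len_eq_card_inversions, len_inv,
      len_inv] at hasc
    have := h i
    omega
  rw [← inv_inv σ, hinv]
  rfl

lemma len_revPerm : len (Fin.revPerm : Perm (Fin (n + 1))) = ∑ i : Fin (n + 1), (n - i) := by
  rw [len_eq_card_inversions, card_inversions_revPerm]

theorem weakOrder_descending_induction {P : Perm (Fin (n + 1)) → Prop}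
    (longest : P Fin.revPerm)
    (step : ∀ σ (i : Fin n), len (simpleT i * σ) < len σ → P σ → P (simpleT i * σ))
    (σ : Perm (Fin (n + 1))) : P σ := by
  have len_le (τ : Perm (Fin (n + 1))) : len τ ≤ Fintype.card (Fin (n + 1) × Fin (n + 1)) :=
    len_eq_card_inversions τ ▸ Finset.card_le_univ _
  induction hm : Fintype.card (Fin (n + 1) × Fin (n + 1)) - len σ
    using Nat.strong_induction_on generalizing σ with
  | _ m ih =>
    by_cases hσ : ∀ i : Fin n, len (simpleT i * σ) < len σ
    · exact eq_revPerm_of_forall_len_simpleT_mul_lt hσ ▸ longest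
    · push Not at hσ
      obtain ⟨i, hi⟩ := hσ
      have hup := len_simpleT_mul i σ
      have hle := len_le (simpleT i * σ)
      have hstep := step (simpleT i * σ) i (by rw [simpleT_mul_cancel_left]; omega)
        (ih _ (by omega) (simpleT i * σ) rfl)
      rwa [simpleT_mul_cancel_left] at hstep

end Length

section Polynomial

variable {ι R : Type*} [CommRing R]

lemma isLeftRegular_X_sub_X {i j : ι} (hij : i ≠ j) :
    IsLeftRegular (X i - X j : MvPolynomial ι R) := by
  classical
  let φ : MvPolynomial ι R →ₐ[R] MvPolynomial ι R := aeval (Function.update X i (X i + X j))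
  let ψ : MvPolynomial ι R →ₐ[R] MvPolynomial ι R := aeval (Function.update X i (X i - X j))
  have hφ : φ (X i - X j) = X i := by simp [φ, hij.symm]
  have hψφ (p : MvPolynomial ι R) : ψ (φ p) = p := by
    suffices ψ.comp φ = AlgHom.id R _ from DFunLike.congr_fun this p
    ext k
    by_cases hk : k = i
    · subst hk
      simp [φ, ψ, hij.symm]
    · simp [φ, ψ, hk]
  intro p q hpq
  have hX : X i * φ p = X i * φ q := by
    rw [← hφ, ← map_mul, ← map_mul]
    exact congrArg φ hpq
  exact Function.LeftInverse.injective hψφ (isRegular_X.left hX)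

lemma isHomogeneous_of_isLeftRegular_mul {p q : MvPolynomial ι R} {d m : ℕ}
    (hreg : IsLeftRegular p) (hp : p.IsHomogeneous d) (hpq : (p * q).IsHomogeneous (d + m)) :
    q.IsHomogeneous m := by
  let _ := gradedAlgebra (σ := ι) (R := R)
  have hcomp : p * homogeneousComponent m q = p * q := by
    have h := DirectSum.coe_decompose_mul_add_of_left_mem (homogeneousSubmodule ι R) (j := m)
      (b := q) hp
    rwa [DirectSum.decompose_of_mem_same _ hpq, ← DirectSum.Decomposition.decompose'_eq,
      decomposition.decompose'_apply, eq_comm] at h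
  rw [← hreg hcomp]
  exact homogeneousComponent_isHomogeneous m q

lemma rename_swap_rename_swap [DecidableEq ι] (i j : ι) (p : MvPolynomial ι R) :
    rename (swap i j) (rename (swap i j) p) = p := by
  rw [rename_rename, ← Perm.coe_mul, swap_mul_self, Perm.coe_one, rename_id_apply]

lemma X_sub_X_mul_monomial [DecidableEq ι] {i j : ι} {d : ι →₀ ℕ} (hd : d i = d j) :
    (X i - X j : MvPolynomial ι R) * monomial d 1 =
      monomial (d + Finsupp.single i 1) 1 -
        rename (swap i j) (monomial (d + Finsupp.single i 1) 1) := by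
  have hswap : d.mapDomain (swap i j) = d := by
    ext k
    rw [Finsupp.mapDomain_equiv_apply, symm_swap]
    rcases eq_or_ne k i with rfl | hki
    · rw [swap_apply_left, hd]
    rcases eq_or_ne k j with rfl | hkj
    · rw [swap_apply_right, hd]
    · rw [swap_apply_of_ne_of_ne hki hkj]
  rw [rename_monomial, Finsupp.mapDomain_add, hswap, Finsupp.mapDomain_single, swap_apply_left,
    sub_mul, X, X, monomial_mul, monomial_mul, mul_one, add_comm d, add_comm d]

variable [Fintype ι]

variable (ι R) in
/-- The derivation `∇ = ∑ i, ∂/∂x_i`. It commutes with the divided differences and lowers Schubert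
polynomials along the right weak order. -/
noncomputable def nabla : Derivation R (MvPolynomial ι R) (MvPolynomial ι R) :=
  ∑ i, pderiv i

lemma nabla_apply (p : MvPolynomial ι R) : nabla ι R p = ∑ i, pderiv i p := by
  rw [nabla, ← Derivation.coeFnAddMonoidHom_apply, map_sum, Finset.sum_apply]
  rfl

lemma nabla_X (i : ι) : nabla ι R (X i) = 1 := by
  classical
  simp [nabla_apply, pderiv_X, Pi.single_apply]

lemma nabla_rename (e : Perm ι) (p : MvPolynomial ι R) :
    nabla ι R (rename e p) = rename e (nabla ι R p) := by
  simp_rw [nabla_apply, map_sum, ← pderiv_rename e.injective]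
  exact (Equiv.sum_comp e fun i ↦ pderiv i (rename e p)).symm

lemma eval_one_nabla {p : MvPolynomial ι R} {m : ℕ} (hp : p.IsHomogeneous m) :
    eval (fun _ ↦ 1) (nabla ι R p) = m * eval (fun _ ↦ 1) p := by
  simpa [nabla_apply] using congrArg (eval fun _ ↦ (1 : R)) hp.sum_X_mul_pderiv

end Polynomial

section UnitDrops

variable {n : ℕ}

/-- Exponent vectors that decrease to `0` by steps of `0` or `1`. They interpolate between the
staircase and `0` through monomials that are Schubert polynomials. -/
def HasUnitDrops (c : Fin (n + 1) →₀ ℕ) : Prop :=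
  c (Fin.last n) = 0 ∧ ∀ i : Fin n, c i.castSucc = c i.succ ∨ c i.castSucc = c i.succ + 1

lemma HasUnitDrops.exists_eq_add_single {c : Fin (n + 1) →₀ ℕ} (hc : HasUnitDrops c)
    (h0 : c ≠ 0) : ∃ (i : Fin n) (d : Fin (n + 1) →₀ ℕ),
      c = d + Finsupp.single i.castSucc 1 ∧ d i.castSucc = d i.succ ∧ HasUnitDrops d := by
  have hdrop : ∃ i : Fin n, c i.castSucc = c i.succ + 1 := by
    by_contra! hno
    refine h0 (Finsupp.ext fun j ↦ ?_)
    induction j using Fin.reverseInduction with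
    | last => exact hc.1
    | cast i hi => exact ((hc.2 i).resolve_right (hno i)).trans hi
  obtain ⟨i, (hi : c i.castSucc = c i.succ + 1), hmin⟩ := WellFounded.has_min
    (wellFounded_lt (α := Fin n)) {i | c i.castSucc = c i.succ + 1} hdrop
  obtain ⟨d, rfl⟩ : ∃ d, c = d + Finsupp.single i.castSucc 1 :=
    ⟨_, (Finsupp.sub_add_single_one_cancel (by omega)).symm⟩
  have hprev (k : Fin n) (hk : k.succ = i.castSucc) :
      d k.castSucc = d k.succ + 1 := by
    have hki : k < i := by
      rw [Fin.ext_iff, Fin.val_succ, Fin.val_castSucc] at hk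
      rw [Fin.lt_def]
      omega
    have := (hc.2 k).resolve_right fun h ↦ hmin k h hki
    simpa [hk, hki.ne] using this
  refine ⟨i, d, rfl, ?_, ?_, fun k ↦ ?_⟩
  · simpa [Fin.castSucc_lt_succ.ne'] using hi
  · simpa using hc.1
  rcases eq_or_ne k i with rfl | hki
  · left
    simpa [Fin.castSucc_lt_succ.ne'] using hi
  by_cases hk : k.succ = i.castSucc
  · exact .inr (hprev k hk)
  · simpa [hki, hk] using hc.2 k

/-- The exponent vector `(n, n - 1, …, 0)` of the Schubert polynomial of the longest permutation. -/
noncomputable def staircase (n : ℕ) : Fin (n + 1) →₀ ℕ :=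
  Finsupp.equivFunOnFinite.symm fun i ↦ n - i

lemma staircase_apply (i : Fin (n + 1)) : staircase n i = n - i := rfl

lemma staircase_castSucc (i : Fin n) : staircase n i.castSucc = staircase n i.succ + 1 := by
  simp only [staircase_apply, Fin.val_castSucc, Fin.val_succ]
  omega

lemma staircase_rev_castSucc (i : Fin n) : staircase n i.rev.castSucc = i + 1 := by
  simp only [staircase_apply, Fin.val_castSucc, Fin.val_rev]
  omega

lemma hasUnitDrops_staircase (n : ℕ) : HasUnitDrops (staircase n) :=
  ⟨by simp [staircase_apply], fun i ↦ .inr (staircase_castSucc i)⟩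

lemma degree_staircase (n : ℕ) :
    (staircase n).degree = len (Fin.revPerm : Perm (Fin (n + 1))) := by
  simp [len_revPerm, Finsupp.degree_eq_sum, staircase_apply]

end UnitDrops

section Schubert

variable {R : Type*} [CommRing R] {n : ℕ}

lemma isLeftRegular_X_castSucc_sub_X_succ (i : Fin n) :
    IsLeftRegular (X i.castSucc - X i.succ : MvPolynomial (Fin (n + 1)) R) :=
  isLeftRegular_X_sub_X Fin.castSucc_lt_succ.ne

/-- The defining property of the Schubert polynomials, with coefficients in an arbitrary commutative
ring; `IsSchubertFamily` is the case of complex coefficients. -/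
def IsSchubertFamilyOver (S : Perm (Fin (n + 1)) → MvPolynomial (Fin (n + 1)) R) : Prop :=
  S Fin.revPerm = ∏ i : Fin (n + 1), X i ^ (n - (i : ℕ)) ∧
  ∀ (σ : Perm (Fin (n + 1))) (i : Fin n), len σ = len (simpleT i * σ) + 1 →
    (X i.castSucc - X i.succ) * S (simpleT i * σ) =
      S σ - rename (swap i.castSucc i.succ) (S σ)

namespace IsSchubertFamilyOver

variable {S : Perm (Fin (n + 1)) → MvPolynomial (Fin (n + 1)) R}

lemma apply_revPerm (hS : IsSchubertFamilyOver S) :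
    S Fin.revPerm = monomial (staircase n) 1 := by
  rw [hS.1, monomial_eq, Finsupp.prod_fintype _ _ (by simp)]
  simp [staircase_apply]

lemma X_sub_X_mul_apply_of_lt (hS : IsSchubertFamilyOver S) {σ : Perm (Fin (n + 1))} {i : Fin n}
    (h : len (simpleT i * σ) < len σ) :
    (X i.castSucc - X i.succ) * S (simpleT i * σ) =
      S σ - rename (swap i.castSucc i.succ) (S σ) :=
  hS.2 σ i ((len_simpleT_mul i σ).resolve_left (by omega))

lemma rename_swap_apply_of_not_lt (hS : IsSchubertFamilyOver S) {σ : Perm (Fin (n + 1))} {i : Fin n}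
    (h : ¬len (simpleT i * σ) < len σ) : rename (swap i.castSucc i.succ) (S σ) = S σ := by
  have hdiv : (X i.castSucc - X i.succ) * S σ = S (simpleT i * σ) -
      rename (swap i.castSucc i.succ) (S (simpleT i * σ)) := by
    have := hS.2 (simpleT i * σ) i
    rw [simpleT_mul_cancel_left] at this
    exact this ((len_simpleT_mul i σ).resolve_right (by omega))
  have hswap := congrArg (rename (swap i.castSucc i.succ)) hdiv
  rw [map_sub, rename_swap_rename_swap, map_mul, map_sub, rename_X, rename_X, swap_apply_left,
    swap_apply_right] at hswap
  refine isLeftRegular_X_castSucc_sub_X_succ i ?_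
  linear_combination -hdiv - hswap

lemma X_sub_X_mul_ite (hS : IsSchubertFamilyOver S) (σ : Perm (Fin (n + 1))) (i : Fin n) :
    (X i.castSucc - X i.succ) *
        (if len (simpleT i * σ) < len σ then S (simpleT i * σ) else 0) =
      S σ - rename (swap i.castSucc i.succ) (S σ) := by
  split_ifs with h
  · exact hS.X_sub_X_mul_apply_of_lt h
  · rw [hS.rename_swap_apply_of_not_lt h, mul_zero, sub_self]

lemma isHomogeneous (hS : IsSchubertFamilyOver S) (σ : Perm (Fin (n + 1))) :
    (S σ).IsHomogeneous (len σ) := by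
  induction σ using weakOrder_descending_induction with
  | longest =>
    rw [hS.apply_revPerm]
    exact isHomogeneous_monomial 1 (degree_staircase n)
  | step σ i h ih =>
    refine isHomogeneous_of_isLeftRegular_mul (isLeftRegular_X_castSucc_sub_X_succ i)
      ((isHomogeneous_X R _).sub (isHomogeneous_X R _)) ?_
    have hlen : 1 + len (simpleT i * σ) = len σ := by
      have := len_simpleT_mul i σ
      omega
    simpa only [hS.X_sub_X_mul_apply_of_lt h, hlen] using ih.sub ih.rename_isHomogeneous

lemma apply_simpleT_mul_of_eq_monomial [Nontrivial R] (hS : IsSchubertFamilyOver S)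
    {σ : Perm (Fin (n + 1))} {i : Fin n} {d : Fin (n + 1) →₀ ℕ}
    (hσ : S σ = monomial (d + Finsupp.single i.castSucc 1) 1) (hd : d i.castSucc = d i.succ) :
    len (simpleT i * σ) < len σ ∧ S (simpleT i * σ) = monomial d 1 := by
  have hlt : len (simpleT i * σ) < len σ := by
    by_contra h
    have hsymm := hS.rename_swap_apply_of_not_lt h
    rw [hσ, rename_monomial, monomial_left_inj one_ne_zero] at hsymm
    have := DFunLike.congr_fun hsymm i.succ
    rw [Finsupp.mapDomain_equiv_apply] at this
    simp [hd, Fin.castSucc_lt_succ.ne'] at this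
  refine ⟨hlt, isLeftRegular_X_castSucc_sub_X_succ i ?_⟩
  simp only [hS.X_sub_X_mul_apply_of_lt hlt, X_sub_X_mul_monomial hd, hσ]

lemma apply_one_of_eq_monomial [Nontrivial R] (hS : IsSchubertFamilyOver S) {c : Fin (n + 1) →₀ ℕ}
    (hc : HasUnitDrops c) {σ : Perm (Fin (n + 1))} (hσ : S σ = monomial c 1)
    (hlen : c.degree = len σ) : S 1 = 1 := by
  induction hm : c.degree generalizing c σ with
  | zero =>
    rw [← eq_one_of_len_eq_zero (hlen.symm.trans hm), hσ, (Finsupp.degree_eq_zero_iff c).1 hm]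
    rfl
  | succ m ih =>
    have hc0 : c ≠ 0 := by
      rintro rfl
      simp at hm
    obtain ⟨i, d, rfl, hd, hdrops⟩ := hc.exists_eq_add_single hc0
    obtain ⟨hlt, hmono⟩ := hS.apply_simpleT_mul_of_eq_monomial hσ hd
    have hstep := (len_simpleT_mul i σ).resolve_left (by omega)
    rw [map_add, Finsupp.degree_single] at hm hlen
    exact ih hdrops hmono (by omega) (by omega)

theorem apply_one (hS : IsSchubertFamilyOver S) : S 1 = 1 := by
  nontriviality R
  exact hS.apply_one_of_eq_monomial (hasUnitDrops_staircase n) hS.apply_revPerm (degree_staircase n)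

lemma apply_revPerm_mul_simpleT [Nontrivial R] (hS : IsSchubertFamilyOver S) (k : Fin n) :
    len (Fin.revPerm * simpleT k) < len (Fin.revPerm : Perm (Fin (n + 1))) ∧
      S (Fin.revPerm * simpleT k) =
        monomial (staircase n - Finsupp.single k.rev.castSucc 1) 1 := by
  obtain ⟨d, hd⟩ : ∃ d, staircase n = d + Finsupp.single k.rev.castSucc 1 :=
    ⟨_, (Finsupp.sub_add_single_one_cancel (by simp [staircase_rev_castSucc])).symm⟩
  have hflat : d k.rev.castSucc = d k.rev.succ := by
    simpa [hd, Fin.castSucc_lt_succ.ne'] using staircase_castSucc k.rev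
  rw [revPerm_mul_simpleT, hd, add_tsub_cancel_right]
  exact hS.apply_simpleT_mul_of_eq_monomial (hd ▸ hS.apply_revPerm) hflat

lemma nabla_apply_revPerm [Nontrivial R] (hS : IsSchubertFamilyOver S) :
    nabla (Fin (n + 1)) R (S Fin.revPerm) =
      ∑ k : Fin n, ((k : ℕ) + 1 : MvPolynomial (Fin (n + 1)) R) * S (Fin.revPerm * simpleT k) := by
  have hlast : pderiv (Fin.last n) (monomial (staircase n) (1 : R)) = 0 := by
    simp [pderiv_monomial, staircase_apply]
  rw [nabla_apply, hS.apply_revPerm, Fin.sum_univ_castSucc, hlast, add_zero,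
    ← Equiv.sum_comp Fin.revPerm]
  refine Finset.sum_congr rfl fun k _ ↦ ?_
  rw [(hS.apply_revPerm_mul_simpleT k).2, Fin.revPerm_apply, pderiv_monomial,
    staircase_rev_castSucc, one_mul, ← Nat.cast_add_one, ← map_natCast (C : R →+* _),
    C_mul_monomial, mul_one]

theorem nabla_apply_eq_sum (hS : IsSchubertFamilyOver S) (σ : Perm (Fin (n + 1))) :
    nabla (Fin (n + 1)) R (S σ) = ∑ k : Fin n, ((k : ℕ) + 1 : MvPolynomial (Fin (n + 1)) R) *
      if len (σ * simpleT k) < len σ then S (σ * simpleT k) else 0 := by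
  nontriviality R
  induction σ using weakOrder_descending_induction with
  | longest => simp_rw [hS.nabla_apply_revPerm, (hS.apply_revPerm_mul_simpleT _).1, if_true]
  | step σ i h ih =>
    have hdiv := congrArg (nabla (Fin (n + 1)) R) (hS.X_sub_X_mul_apply_of_lt h)
    rw [Derivation.leibniz, map_sub, map_sub, nabla_X, nabla_X, sub_self, smul_zero, add_zero,
      smul_eq_mul, nabla_rename, ih] at hdiv
    refine isLeftRegular_X_castSucc_sub_X_succ i ?_
    simp only [hdiv, map_sum, ← Finset.sum_sub_distrib, Finset.mul_sum]
    refine Finset.sum_congr rfl fun k _ ↦ ?_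
    have hk := hS.X_sub_X_mul_ite (σ * simpleT k) i
    simp only [mul_assoc, len_simpleT_mul_mul_lt_iff h]
    by_cases hlt : len (σ * simpleT k) < len σ
    · simp only [hlt, true_and, if_true, map_mul, map_add, map_natCast, map_one]
      linear_combination -((k : ℕ) + 1 : MvPolynomial (Fin (n + 1)) R) * hk
    · simp [hlt]

lemma len_mul_eval_one (hS : IsSchubertFamilyOver S) (σ : Perm (Fin (n + 1))) :
    (len σ : R) * eval (fun _ ↦ 1) (S σ) = ∑ k : Fin n, ((k : ℕ) + 1 : R) *
      if len (σ * simpleT k) < len σ then eval (fun _ ↦ 1) (S (σ * simpleT k)) else 0 := by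
  rw [← eval_one_nabla (hS.isHomogeneous σ), hS.nabla_apply_eq_sum, map_sum]
  simp [apply_ite (eval fun _ ↦ (1 : R))]

end IsSchubertFamilyOver

end Schubert

section Words

variable {n : ℕ} (R : Type*) [CommRing R]

/-- The sum of the weights `i₁ ⋯ i_m` over all words of length `m` for `σ`, reduced or not, with the
letters `Fin n` counted from one. Allowing nonreduced words makes `wordSum_succ` hold without a
length condition. -/
def wordSum (m : ℕ) (σ : Perm (Fin (n + 1))) : R :=
  ∑ w : Fin m → Fin n with (List.ofFn fun t ↦ simpleT (w t)).prod = σ,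
    ∏ t, ((w t : ℕ) + 1 : R)

lemma wordSum_zero_one : wordSum R 0 (1 : Perm (Fin (n + 1))) = 1 := by
  simp [wordSum]

lemma wordSum_eq_zero_of_lt_len {m : ℕ} {σ : Perm (Fin (n + 1))} (h : m < len σ) :
    wordSum R m σ = 0 := by
  rw [wordSum, Finset.filter_false_of_mem, Finset.sum_empty]
  rintro w - rfl
  have hle := len_prod_le (List.ofFn w)
  rw [List.map_ofFn, List.length_ofFn] at hle
  exact h.not_ge hle

lemma wordSum_succ (m : ℕ) (σ : Perm (Fin (n + 1))) :
    wordSum R (m + 1) σ = ∑ k : Fin n, ((k : ℕ) + 1 : R) * wordSum R m (σ * simpleT k) := by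
  simp only [wordSum, Finset.sum_filter]
  rw [← (Fin.snocEquiv fun _ : Fin (m + 1) ↦ Fin n).sum_comp, Fintype.sum_prod_type]
  refine Finset.sum_congr rfl fun k _ ↦ ?_
  rw [Finset.mul_sum]
  refine Finset.sum_congr rfl fun w _ ↦ ?_
  have hlast : (List.ofFn fun t ↦ simpleT (Fin.snocEquiv (fun _ ↦ Fin n) (k, w) t)).prod = σ ↔
      (List.ofFn fun t ↦ simpleT (w t)).prod = σ * simpleT k := by
    rw [List.ofFn_succ', List.concat_eq_append, List.prod_append, List.prod_singleton,
      ← eq_mul_inv_iff_mul_eq]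
    simp [Fin.snocEquiv, simpleT_inv]
  simp only [hlast, mul_ite, mul_zero]
  split_ifs
  · simp [Fin.prod_univ_castSucc, Fin.snocEquiv, mul_comm]
  · rfl

end Words

theorem macdonald_identity_general {R : Type*} [CommRing R] {n : ℕ}
    {S : Perm (Fin (n + 1)) → MvPolynomial (Fin (n + 1)) R} (hS : IsSchubertFamilyOver S)
    (σ : Perm (Fin (n + 1))) :
    (Nat.factorial (len σ) : R) * eval (fun _ ↦ 1) (S σ) =
      ∑ w : Fin (len σ) → Fin n with (List.ofFn fun t ↦ simpleT (w t)).prod = σ,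
        ∏ t, ((w t : ℕ) + 1 : R) := by
  change _ = wordSum R (len σ) σ
  induction hm : len σ generalizing σ with
  | zero => simp [eq_one_of_len_eq_zero hm, hS.apply_one, wordSum_zero_one]
  | succ m ih =>
    have hlen := hS.len_mul_eval_one σ
    rw [hm] at hlen
    rw [Nat.factorial_succ, mul_comm (m + 1), Nat.cast_mul, mul_assoc, hlen, wordSum_succ,
      Finset.mul_sum]
    refine Finset.sum_congr rfl fun k _ ↦ ?_
    have hk := len_mul_simpleT σ k
    rw [mul_left_comm]
    congr 1
    split_ifs with hlt
    · exact ih (σ * simpleT k) (by omega)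
    · rw [mul_zero, wordSum_eq_zero_of_lt_len R (by omega)]

/-- Macdonald's reduced word identity:
`ℓ! ⬝ 𝔖_σ(1,…,1) = Σ_{reduced words (i₁,…,i_ℓ) for σ} i₁ ⋯ i_ℓ`
(reduced words are encoded as functions `Fin ℓ(σ) → Fin n`, indices `1`-based so the
factor for letter `i` is `i + 1`). -/
theorem macdonald_identity {n : ℕ}
    (S : Equiv.Perm (Fin (n+1)) → MvPolynomial (Fin (n+1)) ℂ)
    (hS : IsSchubertFamily S) (σ : Equiv.Perm (Fin (n+1))) :
    (Nat.factorial (len σ) : ℂ) * eval (fun _ => (1 : ℂ)) (S σ) =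
      ∑ w ∈ Finset.univ.filter
          (fun w : Fin (len σ) → Fin n => (List.ofFn fun t => simpleT (w t)).prod = σ),
        ∏ t : Fin (len σ), ((w t : ℕ) + 1 : ℂ) :=
  macdonald_identity_general hS σ
end
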